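/- (Corollary 1 of the paper.) Let m ≥ 1, d = 2m, let J = [[0, I_m], [−I_m, 0]] be the canonical skew-symmetric matrix, let H : ℝ^d → ℝ be C^∞, and let y : [0, h₀] → ℝ^d solve y' = J∇H(y), y(0) = y₀. Let s > ν ≥ 1 and suppose that for every h ∈ (0, h₀] there is a polynomial map σ_h : ℝ → ℝ^d of degree ≤ s with σ_h(0) = y₀ and σ_h'(ch) = Σ_{j=0}^{s−1} P_j(c) γ_j(h) for all c ∈ [0,1], where γ_j(h) = η_j(h) · J ∫₀¹ P_j(τ) ∇H(σ_h(τh)) dτ, with η_j(h) = 1 for 0 ≤ j ≤ s−ν−1 and η_j(h) = 1 − h^{2(s−1−j)} α_j(h) for s−ν ≤ j ≤ s−1, where each α_j(h) is O(h²). Assume moreover that σ_h([0, h]) is contained in a fixed compact set for all h ∈ (0, h₀]. Then ‖σ_h(h) − y(h)‖ = O(h^{2s+1}) as h → 0⁺. -/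

import Mathlib

open MeasureTheory Polynomial

/-- The shifted Legendre polynomial `P j`, orthonormal on `[0,1]`. -/
noncomputable def legP (j : ℕ) : ℝ → ℝ := fun x =>
  (Real.sqrt (2 * j + 1) / (Nat.factorial j)) *
    (Polynomial.derivative^[j] ((Polynomial.X ^ 2 - Polynomial.X) ^ j)).eval x

/-- The phase space `ℝ^{2m}`, with coordinates indexed by `Fin m ⊕ Fin m` (positions ⊕ momenta). -/
abbrev ESp (m : ℕ) := EuclideanSpace ℝ (Fin m ⊕ Fin m)

/-- The canonical skew-symmetric matrix `J = [[0, I_m], [-I_m, 0]]`. -/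
noncomputable def Jmat (m : ℕ) : Matrix (Fin m ⊕ Fin m) (Fin m ⊕ Fin m) ℝ :=
  Matrix.fromBlocks 0 1 (-1) 0

/-!
In the rescaled time `c = t / h`, put `u c = σ_h (c h)` and `g = f ∘ u`. By induction on `k`, the
`k`-th derivative of `g` is `O(h ^ k)`: `u' / h` is a Legendre sum, so only the coefficients of
index `j ≥ k` survive `k` derivatives, and those are `O(h ^ k)` because a function with a polynomial
approximation of degree `< k` up to `O(h ^ k)` is orthogonal to `P_j` up to `O(h ^ k)`. Thus `u`
solves `u' = h (f ∘ u - D)`, where the defect `D` (Legendre remainder of `g` plus damping terms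
`(1 - η_j) P_j g_j`) is `O(h ^ s)`.

The local error is linearized with the fundamental solution `Z` of the adjoint variational equation
along `y`: `Z(h) (σ_h(h) - y(h))` is `h` times a quadratic term `O(h ^ (2 s + 2))`, by Gronwall's
inequality, minus `h ∫ Z D`. Orthogonality doubles the order of this integral: the remainder of `g`
is paired with the remainder of `Z` only, giving `O(h ^ s) O(h ^ s)`, and the `j`-th damping term is
paired with the `j`-th coefficient of `Z` only, giving `h ^ (2 (s - j)) O(h ^ j) O(h ^ j)`.
-/

open Set Filter Asymptotics Topology

/-! ### Shifted Legendre polynomials -/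

section Legendre

theorem integral_pow_mul_one_sub_pow (a b : ℕ) :
    ∫ x in (0 : ℝ)..1, x ^ a * (1 - x) ^ b =
      (a.factorial * b.factorial : ℝ) / (a + b + 1).factorial := by
  have hΓ := Complex.Gamma_mul_Gamma_eq_betaIntegral (s := a + 1) (t := b + 1)
    (by rw [← Nat.cast_add_one, Complex.natCast_re]; positivity)
    (by rw [← Nat.cast_add_one, Complex.natCast_re]; positivity)
  have hβ : Complex.betaIntegral (a + 1) (b + 1) = ↑(∫ x in (0 : ℝ)..1, x ^ a * (1 - x) ^ b) := by
    simp [Complex.betaIntegral, ← intervalIntegral.integral_ofReal]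
  rw [show (a + 1 + (b + 1) : ℂ) = (a + b + 1 : ℕ) + 1 by push_cast; ring, hβ] at hΓ
  simp only [Complex.Gamma_nat_eq_factorial] at hΓ
  rw [eq_div_iff (by positivity), mul_comm]
  exact_mod_cast hΓ.symm

theorem integral_derivative_mul (p q : ℝ[X]) (h0 : p.eval 0 = 0) (h1 : p.eval 1 = 0) :
    ∫ x in (0 : ℝ)..1, (derivative p).eval x * q.eval x =
      -∫ x in (0 : ℝ)..1, p.eval x * (derivative q).eval x := by
  have h := intervalIntegral.integral_mul_deriv_eq_deriv_mul
    (fun x _ => p.hasDerivAt x) (fun x _ => q.hasDerivAt x)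
    ((derivative p).continuous.intervalIntegrable 0 1)
    ((derivative q).continuous.intervalIntegrable 0 1)
  rw [h0, h1] at h
  linarith

theorem integral_iterate_derivative_mul (p q : ℝ[X]) (n : ℕ)
    (h0 : ∀ i < n, (derivative^[i] p).eval 0 = 0) (h1 : ∀ i < n, (derivative^[i] p).eval 1 = 0) :
    ∫ x in (0 : ℝ)..1, (derivative^[n] p).eval x * q.eval x =
      (-1) ^ n * ∫ x in (0 : ℝ)..1, p.eval x * (derivative^[n] q).eval x := by
  induction n generalizing q with
  | zero => simp
  | succ n ih =>
    rw [Function.iterate_succ_apply', integral_derivative_mul _ _ (h0 n n.lt_succ_self)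
      (h1 n n.lt_succ_self), ih _ (fun i hi => h0 i (hi.trans n.lt_succ_self))
      fun i hi => h1 i (hi.trans n.lt_succ_self), ← Function.iterate_succ_apply, pow_succ]
    ring

/-- The polynomial whose evaluation map is `legP j`. -/
noncomputable def legPoly (j : ℕ) : ℝ[X] :=
  C (√(2 * j + 1) / j.factorial) * derivative^[j] ((X ^ 2 - X) ^ j)

theorem legP_eq_eval (j : ℕ) : legP j = fun x => (legPoly j).eval x := by
  funext x
  simp [legP, legPoly]

theorem natDegree_X_sq_sub_X_pow (j : ℕ) : ((X ^ 2 - X : ℝ[X]) ^ j).natDegree = 2 * j := by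
  rw [natDegree_pow, show (X ^ 2 - X : ℝ[X]).natDegree = 2 by compute_degree!, mul_comm]

theorem coeff_legPoly_self (j : ℕ) :
    (legPoly j).coeff j = √(2 * j + 1) * (2 * j).factorial / j.factorial ^ 2 := by
  have hmonic : (X ^ 2 - X : ℝ[X]).Monic := monic_X_pow_sub (by simp)
  have htop : ((X ^ 2 - X : ℝ[X]) ^ j).coeff (j + j) = 1 := by
    have h := (hmonic.pow j).coeff_natDegree
    rwa [natDegree_X_sq_sub_X_pow, two_mul] at h
  have hdesc : (j.factorial : ℝ) * (j + j).descFactorial j = (2 * j).factorial := by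
    have h := Nat.factorial_mul_descFactorial (Nat.le_add_left j j)
    rw [Nat.add_sub_cancel] at h
    rw [two_mul]
    exact_mod_cast h
  rw [legPoly, coeff_C_mul, coeff_iterate_derivative, htop, nsmul_one, ← hdesc]
  field_simp

theorem degree_legPoly (j : ℕ) : (legPoly j).degree = j := by
  refine le_antisymm ?_ (le_degree_of_ne_zero ?_)
  · refine degree_le_of_natDegree_le ((natDegree_C_mul_le _ _).trans ?_)
    refine (natDegree_iterate_derivative _ _).trans ?_
    rw [natDegree_X_sq_sub_X_pow]
    omega
  · rw [coeff_legPoly_self]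
    positivity

theorem natDegree_legPoly (j : ℕ) : (legPoly j).natDegree = j :=
  natDegree_eq_of_degree_eq_some (degree_legPoly j)

theorem eval_iterate_derivative_X_sq_sub_X_pow {i j : ℕ} (hij : i < j) {x : ℝ}
    (hx : x ^ 2 - x = 0) : (derivative^[i] ((X ^ 2 - X : ℝ[X]) ^ j)).eval x = 0 := by
  obtain ⟨q, hq⟩ := pow_sub_dvd_iterate_derivative_pow (X ^ 2 - X : ℝ[X]) j i
  simp [hq, hx, Nat.sub_ne_zero_of_lt hij]

theorem integral_legPoly_mul {j : ℕ} {q : ℝ[X]} (hq : q.natDegree ≤ j) :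
    ∫ x in (0 : ℝ)..1, (legPoly j).eval x * q.eval x =
      √(2 * j + 1) * (j.factorial ^ 2 / (2 * j + 1).factorial) * q.coeff j := by
  have hconst : derivative^[j] q = C (j.factorial * q.coeff j) := by
    rw [eq_C_of_natDegree_le_zero (p := derivative^[j] q)
      ((natDegree_iterate_derivative q j).trans (by omega)), coeff_iterate_derivative]
    simp [Nat.descFactorial_self]
  have hbeta : ∫ x in (0 : ℝ)..1, ((X ^ 2 - X : ℝ[X]) ^ j).eval x =
      (-1) ^ j * (j.factorial ^ 2 / (2 * j + 1).factorial) := by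
    rw [two_mul, sq (j.factorial : ℝ), ← integral_pow_mul_one_sub_pow,
      ← intervalIntegral.integral_const_mul]
    refine intervalIntegral.integral_congr fun x _ => ?_
    simp only [eval_pow, eval_sub, eval_X, ← mul_pow]
    ring
  have hparts := integral_iterate_derivative_mul ((X ^ 2 - X) ^ j) q j
    (fun i hi => eval_iterate_derivative_X_sq_sub_X_pow hi (by simp))
    fun i hi => eval_iterate_derivative_X_sq_sub_X_pow hi (by simp)
  simp only [hconst, eval_C, intervalIntegral.integral_mul_const, hbeta] at hparts
  simp only [legPoly, eval_mul, eval_C, mul_assoc, intervalIntegral.integral_const_mul, hparts]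
  rw [← mul_assoc ((-1 : ℝ) ^ j), ← mul_pow]
  field_simp
  simp

theorem integral_legPoly_mul_eq_zero {j : ℕ} {q : ℝ[X]} (hq : q.natDegree < j) :
    ∫ x in (0 : ℝ)..1, (legPoly j).eval x * q.eval x = 0 := by
  rw [integral_legPoly_mul hq.le, coeff_eq_zero_of_natDegree_lt hq, mul_zero]

theorem integral_legPoly_mul_legPoly (i j : ℕ) :
    ∫ x in (0 : ℝ)..1, (legPoly i).eval x * (legPoly j).eval x = if i = j then 1 else 0 := by
  rcases lt_trichotomy i j with h | rfl | h
  · simp only [mul_comm ((legPoly i).eval _), if_neg h.ne]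
    exact integral_legPoly_mul_eq_zero (by rwa [natDegree_legPoly])
  · rw [integral_legPoly_mul (natDegree_legPoly i).le, coeff_legPoly_self, if_pos rfl,
      Nat.factorial_succ]
    push_cast
    field_simp
    exact Real.sq_sqrt (by positivity)
  · rw [if_neg h.ne', integral_legPoly_mul_eq_zero (by rwa [natDegree_legPoly])]

/-- The polynomials `legPoly j` as a sequence of polynomials of strictly increasing degree, for
the sake of the spanning property `Polynomial.Sequence.span_degreeLT`. -/
noncomputable def legSeq : Polynomial.Sequence ℝ := ⟨legPoly, degree_legPoly⟩

theorem sum_legPoly_mul_integral {s : ℕ} {q : ℝ[X]} (hq : q.degree < s) :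
    ∑ j ∈ Finset.range s, (∫ x in (0 : ℝ)..1, (legPoly j).eval x * q.eval x) • legPoly j = q := by
  have hspan : q ∈ Submodule.span ℝ (legSeq '' Set.Iio s) := by
    rwa [legSeq.span_degreeLT fun i _ => isUnit_iff_ne_zero.2
      (leadingCoeff_ne_zero.2 (legSeq.ne_zero i)), mem_degreeLT]
  have hint (j : ℕ) (p : ℝ[X]) :
      IntervalIntegrable (fun x => (legPoly j).eval x * p.eval x) volume 0 1 :=
    Continuous.intervalIntegrable (by fun_prop) 0 1
  clear hq
  induction hspan using Submodule.span_induction with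
  | mem q hq =>
    obtain ⟨i, hi, rfl⟩ := hq
    simp [legSeq, integral_legPoly_mul_legPoly, Finset.sum_ite_eq', Set.mem_Iio.1 hi]
  | zero => simp
  | add p q _ _ hp hq =>
    simp only [eval_add, mul_add, intervalIntegral.integral_add (hint _ p) (hint _ q), add_smul,
      Finset.sum_add_distrib, hp, hq]
  | smul a p _ hp =>
    simp only [eval_smul, smul_eq_mul, mul_left_comm _ a, intervalIntegral.integral_const_mul]
    simp only [mul_smul, ← Finset.smul_sum, hp]

theorem contDiff_legP (j : ℕ) {n : WithTop ℕ∞} : ContDiff ℝ n (legP j) := by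
  rw [legP_eq_eval]
  exact (legPoly j).contDiff_aeval n

theorem continuous_legP (j : ℕ) : Continuous (legP j) :=
  (contDiff_legP j (n := 0)).continuous

theorem iteratedDeriv_legP_eq_zero {j k : ℕ} (hjk : j < k) : iteratedDeriv k (legP j) = 0 := by
  have hderiv (p : ℝ[X]) (n : ℕ) :
      iteratedDeriv n (fun x => p.eval x) = fun x => (derivative^[n] p).eval x := by
    induction n generalizing p with
    | zero => simp
    | succ n ih =>
      rw [iteratedDeriv_succ', Function.iterate_succ_apply, ← ih]
      exact congrArg _ (funext fun x => p.deriv)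
  rw [legP_eq_eval, hderiv,
    iterate_derivative_eq_zero (by rwa [natDegree_legPoly])]
  simp [Pi.zero_def]

theorem integral_legP_mul_pow {i j : ℕ} (hij : i < j) :
    ∫ t in (0 : ℝ)..1, legP j t * t ^ i = 0 := by
  simpa [legP_eq_eval] using integral_legPoly_mul_eq_zero (j := j) (q := X ^ i) (by simpa)

theorem integral_legP_mul_legP (i j : ℕ) :
    ∫ t in (0 : ℝ)..1, legP i t * legP j t = if i = j then 1 else 0 := by
  simp only [legP_eq_eval, integral_legPoly_mul_legPoly]

theorem sum_legP_mul_integral_pow {s i : ℕ} (hi : i < s) (x : ℝ) :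
    ∑ j ∈ Finset.range s, legP j x * ∫ t in (0 : ℝ)..1, legP j t * t ^ i = x ^ i := by
  have h := sum_legPoly_mul_integral (q := X ^ i) (s := s) (by simpa)
  simpa [legP_eq_eval, eval_finsetSum, mul_comm] using congrArg (eval x) h

end Legendre

/-! ### Legendre expansions of parametrized families -/

section UniformAsymptotics

variable {ι F : Type*} [NormedAddCommGroup F] {l : Filter ι}

/-- `g i c = O(φ i)` along `l`, uniformly for `c ∈ [0, 1]`. -/
def UnifBigO (l : Filter ι) (g : ι → ℝ → F) (φ : ι → ℝ) : Prop :=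
  (fun p : ι × ℝ => g p.1 p.2) =O[l ×ˢ 𝓟 (Icc 0 1)] fun p => φ p.1

namespace UnifBigO

variable {g g₁ g₂ : ι → ℝ → F} {φ ψ : ι → ℝ}

theorem iff_eventually :
    UnifBigO l g φ ↔ ∃ C : ℝ, ∀ᶠ i in l, ∀ c ∈ Icc (0 : ℝ) 1, ‖g i c‖ ≤ C * ‖φ i‖ := by
  simp only [UnifBigO, isBigO_iff, eventually_prod_principal_iff]

theorem of_isBigO {a : ι → F} (ha : a =O[l] φ) : UnifBigO l (fun i _ => a i) φ :=
  ha.comp_tendsto tendsto_fst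

theorem of_continuousOn {p : ℝ → F} (hp : ContinuousOn p (Icc 0 1)) :
    UnifBigO l (fun _ c => p c) fun _ => 1 := by
  obtain ⟨C, hC⟩ := isCompact_Icc.exists_bound_of_continuousOn hp
  exact iff_eventually.2 ⟨C, .of_forall fun _ c hc => by simpa using hC c hc⟩

theorem trans (hg : UnifBigO l g φ) (h : φ =O[l] ψ) : UnifBigO l g ψ :=
  IsBigO.trans hg (h.comp_tendsto tendsto_fst)

theorem congr' (h : ∀ᶠ i in l, EqOn (g₁ i) (g₂ i) (Icc 0 1)) (hg : UnifBigO l g₁ φ) :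
    UnifBigO l g₂ φ :=
  IsBigO.congr' hg (eventually_prod_principal_iff.2 h) .rfl

theorem add (h₁ : UnifBigO l g₁ φ) (h₂ : UnifBigO l g₂ φ) :
    UnifBigO l (fun i c => g₁ i c + g₂ i c) φ :=
  IsBigO.add h₁ h₂

theorem sub (h₁ : UnifBigO l g₁ φ) (h₂ : UnifBigO l g₂ φ) :
    UnifBigO l (fun i c => g₁ i c - g₂ i c) φ :=
  IsBigO.sub h₁ h₂

theorem sum {α : Type*} {t : Finset α} {g : α → ι → ℝ → F} (h : ∀ j ∈ t, UnifBigO l (g j) φ) :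
    UnifBigO l (fun i c => ∑ j ∈ t, g j i c) φ :=
  (IsBigO.sum h).congr_left fun p => by simp only [Finset.sum_apply]

theorem tendsto_zero (hg : UnifBigO l g φ) (hφ : Tendsto φ l (𝓝 0)) :
    Tendsto (fun p : ι × ℝ => g p.1 p.2) (l ×ˢ 𝓟 (Icc 0 1)) (𝓝 0) :=
  IsBigO.trans_tendsto hg (hφ.comp tendsto_fst)

theorem isBigO_one (hg : UnifBigO l g φ) : (fun i => g i 1) =O[l] φ := by
  obtain ⟨C, hC⟩ := iff_eventually.1 hg
  exact .of_bound C (hC.mono fun i hi => hi 1 (right_mem_Icc.2 zero_le_one))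

variable [NormedSpace ℝ F]

theorem smul {a : ι → ℝ → ℝ} (ha : UnifBigO l a φ) (hg : UnifBigO l g ψ) :
    UnifBigO l (fun i c => a i c • g i c) (fun i => φ i * ψ i) :=
  IsBigO.smul ha hg

theorem smul_left (a : ι → ℝ) (hg : UnifBigO l g φ) :
    UnifBigO l (fun i c => a i • g i c) fun i => a i * φ i :=
  (of_isBigO (isBigO_refl a l)).smul hg

theorem clm_apply {G : Type*} [NormedAddCommGroup G] [NormedSpace ℝ G] {W : ι → ℝ → F →L[ℝ] G}
    (hW : UnifBigO l W φ) (hg : UnifBigO l g ψ) :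
    UnifBigO l (fun i c => W i c (g i c)) (fun i => φ i * ψ i) :=
  IsBigO.trans (g := fun p : ι × ℝ => ‖W p.1 p.2‖ * ‖g p.1 p.2‖)
    (.of_norm_le fun p => (W p.1 p.2).le_opNorm (g p.1 p.2))
    (IsBigO.mul (IsBigO.norm_left hW) (IsBigO.norm_left hg))

theorem legP_smul (j : ℕ) (hg : UnifBigO l g φ) : UnifBigO l (fun i c => legP j c • g i c) φ := by
  simpa only [one_mul] using (of_continuousOn (continuous_legP j).continuousOn).smul hg

theorem integral (hg : UnifBigO l g φ) : (fun i => ∫ c in (0 : ℝ)..1, g i c) =O[l] φ := by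
  obtain ⟨C, hC⟩ := iff_eventually.1 hg
  refine .of_bound C (hC.mono fun i hi => ?_)
  simpa using intervalIntegral.norm_integral_le_of_norm_le_const (a := 0) (b := 1) fun c hc =>
    hi c (Ioc_subset_Icc_self (uIoc_of_le (zero_le_one' ℝ) ▸ hc))

end UnifBigO

end UniformAsymptotics

section LegendreExpansion

variable {ι F : Type*} [NormedAddCommGroup F] [NormedSpace ℝ F] {l : Filter ι}

/-- The `j`-th Fourier coefficient of `g` in the orthonormal basis of shifted Legendre polynomials
on `[0, 1]`. -/
noncomputable def legendreCoeff (j : ℕ) (g : ℝ → F) : F :=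
  ∫ t in (0 : ℝ)..1, legP j t • g t

/-- The remainder of the Legendre expansion of `g` truncated to degrees less than `s`, that is, the
component of `g` orthogonal to the polynomials of degree less than `s`. -/
noncomputable def legendreRem (s : ℕ) (g : ℝ → F) (c : ℝ) : F :=
  g c - ∑ j ∈ Finset.range s, legP j c • legendreCoeff j g

/-- The family `g i` is, uniformly on `[0, 1]` and up to an error `O(φ i)` along `l`, a family of
polynomials of degree less than `k`. -/
def PolyApprox (l : Filter ι) (k : ℕ) (g : ι → ℝ → F) (φ : ι → ℝ) : Prop :=
  ∃ B : ι → ℕ → F, UnifBigO l (fun i c => g i c - ∑ n ∈ Finset.range k, c ^ n • B i n) φ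

theorem intervalIntegrable_legP_smul (j : ℕ) {g : ℝ → F} (hg : ContinuousOn g (Icc 0 1)) :
    IntervalIntegrable (fun t => legP j t • g t) volume 0 1 :=
  ((continuous_legP j).continuousOn.smul hg).intervalIntegrable_of_Icc zero_le_one

theorem legendreCoeff_sub (j : ℕ) {g₁ g₂ : ℝ → F} (h₁ : ContinuousOn g₁ (Icc 0 1))
    (h₂ : ContinuousOn g₂ (Icc 0 1)) :
    legendreCoeff j (fun t => g₁ t - g₂ t) = legendreCoeff j g₁ - legendreCoeff j g₂ := by
  simp only [legendreCoeff, smul_sub]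
  exact intervalIntegral.integral_sub (intervalIntegrable_legP_smul j h₁)
    (intervalIntegrable_legP_smul j h₂)

theorem UnifBigO.legendreCoeff {g : ι → ℝ → F} {φ : ι → ℝ} (hg : UnifBigO l g φ) (j : ℕ) :
    (fun i => legendreCoeff j (g i)) =O[l] φ :=
  (hg.legP_smul j).integral

theorem continuousOn_legendreRem (s : ℕ) {g : ℝ → F} (hg : ContinuousOn g (Icc 0 1)) :
    ContinuousOn (legendreRem s g) (Icc 0 1) :=
  hg.sub (continuous_finsetSum _ fun j _ =>
    (continuous_legP j).smul continuous_const).continuousOn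

theorem legendreCoeff_sum_smul [CompleteSpace F] {α : Type*} (t : Finset α) (j : ℕ) {p : α → ℝ → ℝ}
    (hp : ∀ n ∈ t, Continuous (p n)) (B : α → F) :
    legendreCoeff j (fun c => ∑ n ∈ t, p n c • B n) =
      ∑ n ∈ t, (∫ c in (0 : ℝ)..1, legP j c * p n c) • B n := by
  simp only [legendreCoeff, Finset.smul_sum, smul_smul]
  rw [intervalIntegral.integral_finsetSum]
  · simp only [intervalIntegral.integral_smul_const]
  · intro n hn
    exact (((continuous_legP j).mul (hp n hn)).smul continuous_const).intervalIntegrable 0 1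

theorem legendreCoeff_sum_pow_smul [CompleteSpace F] {j k : ℕ} (hkj : k ≤ j) (B : ℕ → F) :
    legendreCoeff j (fun c => ∑ n ∈ Finset.range k, c ^ n • B n) = 0 := by
  rw [legendreCoeff_sum_smul _ _ (fun n _ => continuous_pow n)]
  refine Finset.sum_eq_zero fun n hn => ?_
  rw [integral_legP_mul_pow ((Finset.mem_range.1 hn).trans_le hkj), zero_smul]

theorem legendreRem_sum_pow_smul [CompleteSpace F] (s : ℕ) (B : ℕ → F) :
    legendreRem s (fun c => ∑ n ∈ Finset.range s, c ^ n • B n) = 0 := by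
  ext c
  simp only [legendreRem, legendreCoeff_sum_smul _ _ (fun n _ => continuous_pow n),
    Finset.smul_sum, smul_smul]
  rw [Finset.sum_comm, Pi.zero_apply, sub_eq_zero]
  refine Finset.sum_congr rfl fun n hn => ?_
  rw [← Finset.sum_smul, sum_legP_mul_integral_pow (Finset.mem_range.1 hn)]

theorem legendreCoeff_legendreRem [CompleteSpace F] {j s : ℕ} (hj : j < s) {g : ℝ → F}
    (hg : ContinuousOn g (Icc 0 1)) : legendreCoeff j (legendreRem s g) = 0 := by
  have hsum : Continuous fun c => ∑ i ∈ Finset.range s, legP i c • legendreCoeff i g :=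
    continuous_finsetSum _ fun i _ => (continuous_legP i).smul continuous_const
  rw [show legendreRem s g = fun c => g c - ∑ i ∈ Finset.range s, legP i c • legendreCoeff i g
    from rfl, legendreCoeff_sub j hg hsum.continuousOn,
    legendreCoeff_sum_smul _ _ fun i _ => continuous_legP i]
  simp [integral_legP_mul_legP, hj]

theorem PolyApprox.legendreCoeff [CompleteSpace F] {k j : ℕ} {g : ι → ℝ → F} {φ : ι → ℝ}
    (h : PolyApprox l k g φ) (hg : ∀ᶠ i in l, ContinuousOn (g i) (Icc 0 1)) (hkj : k ≤ j) :
    (fun i => legendreCoeff j (g i)) =O[l] φ := by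
  obtain ⟨B, hB⟩ := h
  refine (hB.legendreCoeff j).congr' (hg.mono fun i hi => ?_) .rfl
  dsimp only
  rw [legendreCoeff_sub j hi (by fun_prop), legendreCoeff_sum_pow_smul hkj, sub_zero]

theorem PolyApprox.legendreRem [CompleteSpace F] {s : ℕ} {g : ι → ℝ → F} {φ : ι → ℝ}
    (h : PolyApprox l s g φ) (hg : ∀ᶠ i in l, ContinuousOn (g i) (Icc 0 1)) :
    UnifBigO l (fun i => legendreRem s (g i)) φ := by
  obtain ⟨B, hB⟩ := h
  refine (hB.sub (.sum fun j (_ : j ∈ Finset.range s) =>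
    (UnifBigO.of_isBigO (hB.legendreCoeff j)).legP_smul j)).congr' (hg.mono fun i hi c _ => ?_)
  have hpoly := congrFun (legendreRem_sum_pow_smul s (B i)) c
  simp only [_root_.legendreRem, Pi.zero_apply, sub_eq_zero] at hpoly
  have hcoeff (j : ℕ) := legendreCoeff_sub j hi
    (g₂ := fun c => ∑ n ∈ Finset.range s, c ^ n • B i n) (by fun_prop)
  simp only [_root_.legendreRem, hcoeff, smul_sub, Finset.sum_sub_distrib, ← hpoly]
  abel

section Pairing

variable {G : Type*} [NormedAddCommGroup G] [NormedSpace ℝ G]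

theorem legendreCoeff_clm_apply [CompleteSpace F] [CompleteSpace G] (j : ℕ) (A : F →L[ℝ] G)
    {g : ℝ → F} (hg : ContinuousOn g (Icc 0 1)) :
    legendreCoeff j (fun c => A (g c)) = A (legendreCoeff j g) := by
  simp only [legendreCoeff, ← A.intervalIntegral_comp_comm (intervalIntegrable_legP_smul j hg),
    map_smul]

theorem integral_clm_legP_smul [CompleteSpace G] (j : ℕ) {W : ℝ → F →L[ℝ] G}
    (hW : ContinuousOn W (Icc 0 1)) (v : F) :
    ∫ c in (0 : ℝ)..1, W c (legP j c • v) = legendreCoeff j W v := by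
  rw [← ContinuousLinearMap.apply_apply v (legendreCoeff j W), ← legendreCoeff_clm_apply j _ hW]
  simp only [legendreCoeff, map_smul, ContinuousLinearMap.apply_apply]

theorem integral_clm_sum_legP_smul [CompleteSpace G] (t : Finset ℕ) {W : ℝ → F →L[ℝ] G}
    (hW : ContinuousOn W (Icc 0 1)) (β : ℕ → F) :
    ∫ c in (0 : ℝ)..1, W c (∑ j ∈ t, legP j c • β j) = ∑ j ∈ t, legendreCoeff j W (β j) := by
  simp only [map_sum, ← integral_clm_legP_smul _ hW]
  exact intervalIntegral.integral_finsetSum fun j _ => ContinuousOn.intervalIntegrable_of_Icc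
    zero_le_one (hW.clm_apply ((continuous_legP j).smul continuous_const).continuousOn)

theorem integral_clm_legendreRem [CompleteSpace F] [CompleteSpace G] (s : ℕ) {W : ℝ → F →L[ℝ] G}
    (hW : ContinuousOn W (Icc 0 1)) {g : ℝ → F} (hg : ContinuousOn g (Icc 0 1)) :
    ∫ c in (0 : ℝ)..1, W c (legendreRem s g c) =
      ∫ c in (0 : ℝ)..1, legendreRem s W c (legendreRem s g c) := by
  have hr := continuousOn_legendreRem s hg
  have hlow (j : ℕ) (hj : j ∈ Finset.range s) :
      ∫ c in (0 : ℝ)..1, legP j c • legendreCoeff j W (legendreRem s g c) = 0 := by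
    have h := legendreCoeff_clm_apply j (legendreCoeff j W) hr
    rwa [legendreCoeff_legendreRem (Finset.mem_range.1 hj) hg, map_zero] at h
  have hcont (j : ℕ) :
      ContinuousOn (fun c => legP j c • legendreCoeff j W (legendreRem s g c)) (Icc 0 1) :=
    (continuous_legP j).continuousOn.smul ((legendreCoeff j W).continuous.comp_continuousOn hr)
  have hsplit (c : ℝ) : legendreRem s W c (legendreRem s g c) = W c (legendreRem s g c) -
      ∑ j ∈ Finset.range s, legP j c • legendreCoeff j W (legendreRem s g c) := by
    simp [legendreRem.eq_1 s W]
  simp only [hsplit]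
  rw [intervalIntegral.integral_sub ((hW.clm_apply hr).intervalIntegrable_of_Icc zero_le_one)
      ((continuousOn_finsetSum _ fun j _ => hcont j).intervalIntegrable_of_Icc zero_le_one),
    intervalIntegral.integral_finsetSum fun j _ =>
      (hcont j).intervalIntegrable_of_Icc zero_le_one,
    Finset.sum_eq_zero hlow, sub_zero]

theorem PolyApprox.integral_clm_legendreRem [CompleteSpace F] [CompleteSpace G] {s : ℕ}
    {W : ι → ℝ → F →L[ℝ] G} {g : ι → ℝ → F} {φ ψ : ι → ℝ} (hWs : PolyApprox l s W ψ)
    (hgs : PolyApprox l s g φ)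
    (hW : ∀ᶠ i in l, ContinuousOn (W i) (Icc 0 1)) (hg : ∀ᶠ i in l, ContinuousOn (g i) (Icc 0 1)) :
    (fun i => ∫ c in (0 : ℝ)..1, W i c (_root_.legendreRem s (g i) c)) =O[l]
      fun i => ψ i * φ i := by
  refine ((hWs.legendreRem hW).clm_apply (hgs.legendreRem hg)).integral.congr' ?_ .rfl
  filter_upwards [hW, hg] with i hWi hgi using (_root_.integral_clm_legendreRem s hWi hgi).symm

end Pairing

end LegendreExpansion

section TaylorApproximation

variable {ι F : Type*} [NormedAddCommGroup F] [NormedSpace ℝ F] {l : Filter ι}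

theorem exists_norm_sub_sum_pow_smul_le {g : ℝ → F} {T M : ℝ} {k : ℕ} (hT : 0 ≤ T)
    (hg : ContDiffOn ℝ k g (Icc 0 T))
    (hM : ∀ x ∈ Icc 0 T, ‖iteratedDerivWithin k g (Icc 0 T) x‖ ≤ M) :
    ∃ B : ℕ → F, ∀ x ∈ Icc 0 T, ‖g x - ∑ n ∈ Finset.range k, x ^ n • B n‖ ≤ M * x ^ k := by
  cases k with
  | zero => exact ⟨0, by simpa using hM⟩
  | succ k =>
    refine ⟨fun n => (n.factorial : ℝ)⁻¹ • iteratedDerivWithin n g (Icc 0 T) 0, fun x hx => ?_⟩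
    have hM0 : 0 ≤ M := (norm_nonneg _).trans (hM x hx)
    have hx0 : 0 ≤ x := hx.1
    have h := taylor_mean_remainder_bound hT (by exact_mod_cast hg) hx hM
    simp only [taylor_within_apply, sub_zero, mul_comm _ (x ^ _), mul_smul] at h
    refine h.trans ?_
    rw [mul_comm]
    exact div_le_self (by positivity) (by exact_mod_cast k.factorial_pos)

theorem polyApprox_of_iteratedDerivWithin {k : ℕ} {g : ι → ℝ → F} {φ : ι → ℝ}
    (hg : ∀ᶠ i in l, ContDiffOn ℝ k (g i) (Icc 0 1))
    (h : UnifBigO l (fun i => iteratedDerivWithin k (g i) (Icc 0 1)) φ) : PolyApprox l k g φ := by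
  obtain ⟨C, hC⟩ := UnifBigO.iff_eventually.1 h
  have hB : ∀ᶠ i in l, ∃ B : ℕ → F, ∀ c ∈ Icc (0 : ℝ) 1,
      ‖g i c - ∑ n ∈ Finset.range k, c ^ n • B n‖ ≤ C * ‖φ i‖ * c ^ k :=
    (hg.and hC).mono fun i hi => exists_norm_sub_sum_pow_smul_le zero_le_one hi.1 hi.2
  obtain ⟨B, hB⟩ := skolem.1 hB
  refine ⟨B, UnifBigO.iff_eventually.2 ⟨C, ?_⟩⟩
  filter_upwards [hC, hB] with i hCi hBi c hc
  refine (hBi c hc).trans (mul_le_of_le_one_right ?_ (pow_le_one₀ hc.1 hc.2))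
  exact (norm_nonneg _).trans (hCi c hc)

theorem eventually_forall_mul_mem_Icc {T : ℝ} (hT : 0 < T) :
    ∀ᶠ h in 𝓝[>] 0, ∀ c ∈ Icc (0 : ℝ) 1, c * h ∈ Icc 0 T := by
  filter_upwards [Ioo_mem_nhdsGT hT] with h hh c hc
  exact ⟨mul_nonneg hc.1 hh.1.le, (mul_le_of_le_one_left hh.1.le hc.2).trans hh.2.le⟩

theorem polyApprox_comp_mul {k : ℕ} {g : ℝ → F} {T : ℝ} (hT : 0 < T)
    (hg : ContDiffOn ℝ k g (Icc 0 T)) :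
    PolyApprox (𝓝[>] 0) k (fun h c => g (c * h)) fun h => h ^ k := by
  obtain ⟨M, hM⟩ := isCompact_Icc.exists_bound_of_continuousOn
    (hg.continuousOn_iteratedDerivWithin le_rfl (uniqueDiffOn_Icc hT))
  obtain ⟨B, hB⟩ := exists_norm_sub_sum_pow_smul_le hT.le hg hM
  have hM0 : 0 ≤ M := (norm_nonneg _).trans (hM 0 (left_mem_Icc.2 hT.le))
  refine ⟨fun h n => h ^ n • B n, UnifBigO.iff_eventually.2 ⟨M, ?_⟩⟩
  filter_upwards [eventually_forall_mul_mem_Icc hT, self_mem_nhdsWithin] with h hmem hpos c hc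
  have hh : 0 ≤ h := le_of_lt hpos
  simp only [smul_smul, ← mul_pow]
  refine (hB _ (hmem c hc)).trans ?_
  rw [Real.norm_of_nonneg (pow_nonneg hh k)]
  gcongr
  · exact (hmem c hc).1
  · exact mul_le_of_le_one_left hh hc.2

end TaylorApproximation

section Composition

variable {ι E F : Type*} [NormedAddCommGroup E] [NormedSpace ℝ E] [NormedAddCommGroup F]
  [NormedSpace ℝ F] {l : Filter ι} {f : E → F} {K : Set E}

theorem exists_forall_norm_iteratedFDeriv_le {k : ℕ} (hK : IsCompact K)
    (hf : ContDiff ℝ k f) : ∃ C, ∀ n ≤ k, ∀ x ∈ K, ‖iteratedFDeriv ℝ n f x‖ ≤ C := by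
  have hbound (n : Fin (k + 1)) : ∃ C, ∀ x ∈ K, ‖iteratedFDeriv ℝ n f x‖ ≤ C :=
    hK.exists_bound_of_continuousOn
      (hf.continuous_iteratedFDeriv (by exact_mod_cast n.is_le)).continuousOn
  choose C hC using hbound
  obtain ⟨C', hC'⟩ := (finite_range C).bddAbove
  exact ⟨C', fun n hn x hx => (hC ⟨n, Nat.lt_succ_of_le hn⟩ x hx).trans (hC' ⟨_, rfl⟩)⟩

theorem UnifBigO.iteratedDerivWithin_comp {k : ℕ} {u : ι → ℝ → E} {ε : ι → ℝ}
    (hK : IsCompact K) (hf : ContDiff ℝ k f)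
    (hu : ∀ᶠ i in l, ContDiffOn ℝ k (u i) (Icc 0 1))
    (huK : ∀ᶠ i in l, ∀ c ∈ Icc (0 : ℝ) 1, u i c ∈ K)
    (hderiv : ∀ n, 1 ≤ n → n ≤ k →
      UnifBigO l (fun i => iteratedDerivWithin n (u i) (Icc 0 1)) fun i => ε i ^ n) :
    UnifBigO l (fun i => iteratedDerivWithin k (f ∘ u i) (Icc 0 1)) fun i => ε i ^ k := by
  obtain ⟨C, hC⟩ := exists_forall_norm_iteratedFDeriv_le hK hf
  have hlarge : ∀ n ∈ Finset.Icc 1 k, ∀ᶠ D : ℝ in atTop, ∀ᶠ i in l, ∀ c ∈ Icc (0 : ℝ) 1,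
      ‖iteratedDerivWithin n (u i) (Icc 0 1) c‖ ≤ D * ‖ε i ^ n‖ := by
    intro n hn
    obtain ⟨Cn, hCn⟩ := UnifBigO.iff_eventually.1
      (hderiv n (Finset.mem_Icc.1 hn).1 (Finset.mem_Icc.1 hn).2)
    filter_upwards [eventually_ge_atTop Cn] with D hD
    exact hCn.mono fun i hi c hc => (hi c hc).trans (by gcongr)
  obtain ⟨D, hD1, hD⟩ :=
    ((eventually_ge_atTop 1).and ((Finset.eventually_all _).2 hlarge)).exists
  refine UnifBigO.iff_eventually.2 ⟨k.factorial * C * D ^ k, ?_⟩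
  filter_upwards [hu, huK, (Finset.eventually_all _).2 hD] with i hui huKi hDi c hc
  have h01 := uniqueDiffOn_Icc (zero_lt_one' ℝ)
  rw [← norm_iteratedFDerivWithin_eq_norm_iteratedDerivWithin]
  refine (norm_iteratedFDerivWithin_comp_le hf.contDiffOn hui le_rfl uniqueDiffOn_univ h01
    (mapsTo_univ _ _) hc (C := C) (D := D * ‖ε i‖) (fun n hn => ?_) fun n hn1 hnk => ?_).trans_eq ?_
  · rw [iteratedFDerivWithin_univ]
    exact hC n hn _ (huKi c hc)
  · rw [norm_iteratedFDerivWithin_eq_norm_iteratedDerivWithin]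
    refine (hDi n (Finset.mem_Icc.2 ⟨hn1, hnk⟩) c hc).trans ?_
    rw [mul_pow, norm_pow]
    gcongr
    exact le_self_pow₀ hD1 (by omega)
  · rw [norm_pow]
    ring

end Composition

/-! ### The damped Legendre method -/

section LegendreStep

variable {E : Type*} [NormedAddCommGroup E] [NormedSpace ℝ E] {f : E → E} {s : ℕ}

/-- One step of size `h` of the method for `y' = f y`, in the rescaled time `c = t / h`: the
derivative of `u` is the Legendre expansion of `h • f ∘ u`, truncated to degrees less than `s` and
with its `j`-th coefficient damped by `η j`. -/
def IsLegendreStep (f : E → E) (s : ℕ) (η : ℕ → ℝ) (h : ℝ) (u : ℝ → E) : Prop :=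
  ∀ c ∈ Icc (0 : ℝ) 1, HasDerivWithinAt u
    (h • ∑ j ∈ Finset.range s, legP j c • η j • legendreCoeff j (f ∘ u)) (Icc 0 1) c

namespace IsLegendreStep

variable {η : ℕ → ℝ} {h : ℝ} {u : ℝ → E}

theorem contDiffOn (hu : IsLegendreStep f s η h u) : ContDiffOn ℝ (⊤ : ℕ∞) u (Icc 0 1) := by
  have h01 := uniqueDiffOn_Icc (zero_lt_one' ℝ)
  refine (contDiffOn_infty_iff_derivWithin h01).2
    ⟨fun c hc => (hu c hc).differentiableWithinAt, ?_⟩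
  refine ContDiff.contDiffOn ?_ |>.congr fun c hc => (hu c hc).derivWithin (h01 c hc)
  exact contDiff_const.smul (.sum fun j _ => (contDiff_legP j).smul contDiff_const)

theorem iteratedDerivWithin_succ (hu : IsLegendreStep f s η h u) (k : ℕ) {c : ℝ}
    (hc : c ∈ Icc (0 : ℝ) 1) :
    iteratedDerivWithin (k + 1) u (Icc 0 1) c = h • ∑ j ∈ Finset.range s,
      iteratedDeriv k (legP j) c • η j • legendreCoeff j (f ∘ u) := by
  have h01 := uniqueDiffOn_Icc (zero_lt_one' ℝ)
  have hsmooth (j : ℕ) :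
      ContDiff ℝ k fun c => legP j c • η j • legendreCoeff j (f ∘ u) :=
    (contDiff_legP j).smul contDiff_const
  have hsum : ContDiff ℝ k fun c => h • ∑ j ∈ Finset.range s,
      legP j c • η j • legendreCoeff j (f ∘ u) :=
    contDiff_const.smul (.sum fun j _ => hsmooth j)
  rw [iteratedDerivWithin_succ',
    iteratedDerivWithin_congr (fun c hc => (hu c hc).derivWithin (h01 c hc)) hc,
    iteratedDerivWithin_eq_iteratedDeriv h01 hsum.contDiffAt hc,
    iteratedDeriv_fun_const_smul_field, iteratedDeriv_fun_sum fun j _ => (hsmooth j).contDiffAt]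
  simp only [iteratedDeriv_smul_const ((contDiff_legP _).contDiffAt)]

end IsLegendreStep

variable [CompleteSpace E] {K : Set E} {η : ℕ → ℝ → ℝ} {u : ℝ → ℝ → E}

theorem IsLegendreStep.unifBigO_iteratedDerivWithin_succ {k : ℕ}
    (hη : ∀ j < s, η j =O[𝓝[>] 0] fun _ => (1 : ℝ))
    (hu : ∀ᶠ h in 𝓝[>] 0, IsLegendreStep f s (fun j => η j h) h (u h))
    (hfu : ∀ᶠ h in 𝓝[>] 0, ContinuousOn (f ∘ u h) (Icc 0 1))
    (happrox : PolyApprox (𝓝[>] 0) k (fun h => f ∘ u h) fun h => h ^ k) :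
    UnifBigO (𝓝[>] 0) (fun h => iteratedDerivWithin (k + 1) (u h) (Icc 0 1))
      fun h => h ^ (k + 1) := by
  have hterm (j : ℕ) (hj : j ∈ Finset.range s) : UnifBigO (𝓝[>] 0)
      (fun h c => iteratedDeriv k (legP j) c • η j h • legendreCoeff j (f ∘ u h))
      fun h => h ^ k := by
    rcases lt_or_ge j k with hjk | hkj
    · simpa [iteratedDeriv_legP_eq_zero hjk] using
        UnifBigO.of_isBigO (isBigO_zero (E' := E) (fun h : ℝ => h ^ k) (𝓝[>] 0))
    · have hcoeff := (hη j (Finset.mem_range.1 hj)).smul (happrox.legendreCoeff hfu hkj)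
      have hP := (contDiff_legP j (n := k)).continuous_iteratedDeriv k le_rfl
      simpa using (UnifBigO.of_continuousOn hP.continuousOn).smul (.of_isBigO hcoeff)
  simp only [pow_succ']
  refine (UnifBigO.smul_left (fun h => h) (.sum hterm)).congr' ?_
  filter_upwards [hu] with h hu c hc using (hu.iteratedDerivWithin_succ k hc).symm

theorem IsLegendreStep.polyApprox_comp (hf : ContDiff ℝ (⊤ : ℕ∞) f) (hK : IsCompact K)
    (hη : ∀ j < s, η j =O[𝓝[>] 0] fun _ => (1 : ℝ))
    (hu : ∀ᶠ h in 𝓝[>] 0, IsLegendreStep f s (fun j => η j h) h (u h))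
    (huK : ∀ᶠ h in 𝓝[>] 0, ∀ c ∈ Icc (0 : ℝ) 1, u h c ∈ K) (k : ℕ) :
    PolyApprox (𝓝[>] 0) k (fun h => f ∘ u h) fun h => h ^ k := by
  have husmooth (n : ℕ) : ∀ᶠ h in 𝓝[>] 0, ContDiffOn ℝ n (u h) (Icc 0 1) :=
    hu.mono fun h hu => hu.contDiffOn.of_le (by exact_mod_cast le_top)
  have hfn (n : ℕ) : ContDiff ℝ n f := hf.of_le (by exact_mod_cast le_top)
  have hfu (n : ℕ) : ∀ᶠ h in 𝓝[>] 0, ContDiffOn ℝ n (f ∘ u h) (Icc 0 1) :=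
    (husmooth n).mono fun h hu => (hfn n).comp_contDiffOn hu
  induction k using Nat.strong_induction_on with
  | _ k ih =>
    refine polyApprox_of_iteratedDerivWithin (hfu k)
      (UnifBigO.iteratedDerivWithin_comp hK (hfn k) (husmooth k) huK fun n hn1 hnk => ?_)
    obtain ⟨n, rfl⟩ := Nat.exists_eq_add_of_le' hn1
    exact unifBigO_iteratedDerivWithin_succ hη hu ((hfu 0).mono fun h hfu => hfu.continuousOn)
      (ih n hnk)

end LegendreStep

/-! ### Defects and the adjoint variational equation -/

section LocalEstimates

variable {ι E F : Type*} [NormedAddCommGroup E] [NormedSpace ℝ E] [NormedAddCommGroup F]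
  [NormedSpace ℝ F] {l : Filter ι}

theorem isBigO_sub_sub_fderiv_sub_sq {f : E → F} {x : E} (hf : ContDiffAt ℝ 2 f x) :
    (fun p : E × E => f p.1 - f p.2 - fderiv ℝ f p.2 (p.1 - p.2)) =O[𝓝 (x, x)]
      fun p => ‖p.1 - p.2‖ ^ 2 := by
  have hf' : ContDiffAt ℝ 1 (fderiv ℝ f) x := hf.fderiv_right (by norm_num)
  obtain ⟨L, t, ht, hL⟩ := hf'.exists_lipschitzOnWith
  have hdiff : ∀ᶠ z in 𝓝 x, DifferentiableAt ℝ f z :=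
    (hf.eventually (by simp)).mono fun z hz => hz.differentiableAt (by simp)
  obtain ⟨ε, hε, hball⟩ := Metric.eventually_nhds_iff_ball.1 (hdiff.and ht)
  have hnhds := Metric.ball_mem_nhds x hε
  refine .of_bound L ?_
  filter_upwards [prod_mem_nhds hnhds hnhds] with p ⟨hp1, hp2⟩
  have hseg : segment ℝ p.2 p.1 ⊆ Metric.ball x ε := (convex_ball x ε).segment_subset hp2 hp1
  have hlip : ∀ z ∈ segment ℝ p.2 p.1, ‖fderiv ℝ f z - fderiv ℝ f p.2‖ ≤ L * ‖p.1 - p.2‖ := by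
    intro z hz
    refine (hL.norm_sub_le (hball z (hseg hz)).2 (hball _ hp2).2).trans ?_
    gcongr
    simpa using norm_sub_le_of_mem_segment hz
  refine (Convex.norm_image_sub_le_of_norm_hasFDerivWithin_le'
    (fun z hz => (hball z (hseg hz)).1.hasFDerivAt.hasFDerivWithinAt) hlip
    (convex_segment p.2 p.1) (left_mem_segment ℝ p.2 p.1)
    (right_mem_segment ℝ p.2 p.1)).trans_eq ?_
  rw [norm_pow, norm_norm]
  ring

theorem UnifBigO.of_hasDerivWithinAt {g g' r : ι → ℝ → F} {φ : ι → ℝ}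
    (hg : ∀ᶠ i in l, ∀ c ∈ Icc (0 : ℝ) 1, HasDerivWithinAt (g i) (g' i c) (Icc 0 1) c)
    (hg0 : ∀ᶠ i in l, g i 0 = 0)
    (hgr : (fun p : ι × ℝ => g' p.1 p.2 - r p.1 p.2) =O[l ×ˢ 𝓟 (Icc 0 1)] fun p => g p.1 p.2)
    (hr : UnifBigO l r φ) : UnifBigO l g φ := by
  obtain ⟨L, hL, hgr⟩ := hgr.exists_pos
  obtain ⟨C, hC⟩ := UnifBigO.iff_eventually.1 hr
  refine UnifBigO.iff_eventually.2 ⟨C / L * (Real.exp L - 1), ?_⟩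
  filter_upwards [hg, hg0, hC, eventually_prod_principal_iff.1 hgr.bound] with i hg hg0 hC hgr c hc
  have hderiv : ∀ x ∈ Ico (0 : ℝ) 1, HasDerivWithinAt (g i) (g' i x) (Ici x) x := fun x hx =>
    (hg x (Ico_subset_Icc_self hx)).mono_of_mem_nhdsWithin (Icc_mem_nhdsGE_of_mem hx)
  have hbound : ∀ x ∈ Ico (0 : ℝ) 1, ‖g' i x‖ ≤ L * ‖g i x‖ + C * ‖φ i‖ := fun x hx =>
    (norm_le_norm_sub_add _ (r i x)).trans
      (add_le_add (hgr x (Ico_subset_Icc_self hx)) (hC x (Ico_subset_Icc_self hx)))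
  have h := norm_le_gronwallBound_of_norm_deriv_right_le
    (fun x hx => (hg x hx).continuousWithinAt) hderiv (by rw [hg0, norm_zero]) hbound c hc
  have hC0 : 0 ≤ C * ‖φ i‖ := (norm_nonneg _).trans (hC c hc)
  simp only [gronwallBound_of_K_ne_0 hL.ne', zero_mul, zero_add, sub_zero] at h
  calc ‖g i c‖ ≤ C * ‖φ i‖ / L * (Real.exp (L * c) - 1) := h
    _ ≤ C * ‖φ i‖ / L * (Real.exp L - 1) := by
      gcongr
      exact mul_le_of_le_one_right hL.le hc.2
    _ = C / L * (Real.exp L - 1) * ‖φ i‖ := by ring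

theorem isBigO_clm_apply_of_tendsto_one {Z : ι → E →L[ℝ] E} (hZ : Tendsto Z l (𝓝 1)) (v : ι → E) :
    v =O[l] fun i => Z i (v i) := by
  refine IsEquivalent.isBigO_symm (u := fun i => Z i (v i)) ?_
  have h0 : Tendsto (fun i => ‖Z i - 1‖) l (𝓝 0) := by
    simpa using (tendsto_sub_nhds_zero_iff.2 hZ).norm
  have hle : (fun i => Z i (v i) - v i) =O[l] fun i => ‖Z i - 1‖ * ‖v i‖ :=
    .of_norm_le fun i => by simpa using (Z i - 1).le_opNorm (v i)
  have hlt := ((isLittleO_one_iff ℝ).2 h0).mul_isBigO (isBigO_refl (fun i => ‖v i‖) l)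
  exact hle.trans_isLittleO (by simpa using hlt)

theorem tendsto_comp_mul_prod_principal {X : Type*} [TopologicalSpace X] {y : ℝ → X} {T : ℝ}
    (hT : 0 < T) (hy : ContinuousOn y (Icc 0 T)) :
    Tendsto (fun p : ℝ × ℝ => y (p.2 * p.1)) (𝓝[>] 0 ×ˢ 𝓟 (Icc 0 1)) (𝓝 (y 0)) := by
  have hmul : Tendsto (fun p : ℝ × ℝ => p.2 * p.1) (𝓝[>] 0 ×ˢ 𝓟 (Icc 0 1)) (𝓝 0) := by
    have hid : UnifBigO (𝓝[>] 0) (fun _ c => c) fun _ : ℝ => 1 := .of_continuousOn continuousOn_id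
    have hlim : Tendsto (fun h : ℝ => h * 1) (𝓝[>] 0) (𝓝 0) :=
      (Continuous.tendsto' (by fun_prop) 0 0 (zero_mul 1)).mono_left nhdsWithin_le_nhds
    exact ((hid.smul_left fun h => h).tendsto_zero hlim).congr fun p => mul_comm _ _
  exact (hy 0 (left_mem_Icc.2 hT.le)).tendsto.comp (tendsto_nhdsWithin_iff.2
    ⟨hmul, eventually_prod_principal_iff.2 (eventually_forall_mul_mem_Icc hT)⟩)

end LocalEstimates

section Defect

variable {E : Type*} [NormedAddCommGroup E] [NormedSpace ℝ E] {f : E → E}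

/-- In the rescaled time `c = t / h`, the curve `u` solves `y' = f y` on a step of size `h`
up to the defect `D`. -/
def HasDefect (f : E → E) (h : ℝ) (u D : ℝ → E) : Prop :=
  ∀ c ∈ Icc (0 : ℝ) 1, HasDerivWithinAt u (h • (f (u c) - D c)) (Icc 0 1) c

/-- On `[0, T]` the curve `y` solves `y' = f y`, and `Z` is the fundamental solution of the adjoint
`Z' = -Z ∘ Df(y)` of the variational equation along `y`; that is, `Z t` inverts the derivative of
the time-`t` flow at `y 0`. -/
structure IsAdjointFlow (f : E → E) (T : ℝ) (y : ℝ → E) (Z : ℝ → E →L[ℝ] E) : Prop where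
  pos : 0 < T
  hasDerivWithinAt : ∀ t ∈ Icc 0 T, HasDerivWithinAt y (f (y t)) (Icc 0 T) t
  hasDerivWithinAt_adjoint :
    ∀ t ∈ Icc 0 T, HasDerivWithinAt Z (-(Z t ∘L fderiv ℝ f (y t))) (Icc 0 T) t
  adjoint_zero : Z 0 = 1

theorem exists_isAdjointFlow [CompleteSpace E] (hf : ContDiff ℝ (⊤ : ℕ∞) f) (y₀ : E) :
    ∃ T y Z, IsAdjointFlow f T y Z ∧ y 0 = y₀ ∧ ContDiffOn ℝ (⊤ : ℕ∞) Z (Icc 0 T) := by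
  let v : E × (E →L[ℝ] E) → E × (E →L[ℝ] E) := fun p => (f p.1, -(p.2 ∘L fderiv ℝ f p.1))
  have hf' : ContDiff ℝ (⊤ : ℕ∞) (fderiv ℝ f) := hf.fderiv_right (by simp)
  have hv : ContDiff ℝ (⊤ : ℕ∞) v :=
    (hf.comp contDiff_fst).prodMk (contDiff_snd.clm_comp (hf'.comp contDiff_fst)).neg
  obtain ⟨γ, hγ0, ε, hε, hγ⟩ :=
    ContDiffAt.exists_forall_mem_closedBall_exists_eq_forall_mem_Ioo_hasDerivAt₀
      (hv.of_le (by simp)).contDiffAt (x₀ := (y₀, 1)) 0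
  have hγ' : ∀ t ∈ Icc 0 (ε / 2), HasDerivWithinAt γ (v (γ t)) (Icc 0 (ε / 2)) t := fun t ht =>
    (hγ t ⟨by linarith [ht.1], by linarith [ht.2]⟩).hasDerivWithinAt
  have hsmooth : ContDiffOn ℝ (⊤ : ℕ∞) γ (Icc 0 (ε / 2)) :=
    ODE.contDiffOn_enat_Icc_of_hasDerivWithinAt (f := fun _ => v) (u := univ)
      (hv.comp contDiff_snd).contDiffOn hγ' (mapsTo_univ _ _)
  exact ⟨ε / 2, fun t => (γ t).1, fun t => (γ t).2,
    ⟨half_pos hε, fun t ht => (hγ' t ht).fst, fun t ht => (hγ' t ht).snd, by simp [hγ0]⟩,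
    by simp [hγ0], contDiff_snd.comp_contDiffOn hsmooth⟩

theorem hasDerivWithinAt_comp_mul {y : ℝ → E} {y' : E} {T h c : ℝ}
    (hmem : ∀ c ∈ Icc (0 : ℝ) 1, c * h ∈ Icc 0 T) (hy : HasDerivWithinAt y y' (Icc 0 T) (c * h)) :
    HasDerivWithinAt (fun c => y (c * h)) (h • y') (Icc 0 1) c := by
  have hmul : HasDerivWithinAt (fun c => c * h) h (Icc 0 1) c :=
    (hasDerivAt_mul_const h).hasDerivWithinAt
  exact hy.scomp c hmul hmem

variable {y : ℝ → E} {u D : ℝ → ℝ → E} {T : ℝ} {φ ψ : ℝ → ℝ}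

theorem unifBigO_sub_solution (hf : ContDiffAt ℝ 1 f (y 0)) (hT : 0 < T)
    (hy : ∀ t ∈ Icc 0 T, HasDerivWithinAt y (f (y t)) (Icc 0 T) t)
    (hu : ∀ᶠ h in 𝓝[>] 0, HasDefect f h (u h) (D h)) (hu0 : ∀ᶠ h in 𝓝[>] 0, u h 0 = y 0)
    (hlim : Tendsto (fun p : ℝ × ℝ => u p.1 p.2) (𝓝[>] 0 ×ˢ 𝓟 (Icc 0 1)) (𝓝 (y 0)))
    (hD : UnifBigO (𝓝[>] 0) D φ) :
    UnifBigO (𝓝[>] 0) (fun h c => u h c - y (c * h)) fun h => h * φ h := by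
  have hylim := tendsto_comp_mul_prod_principal hT fun t ht => (hy t ht).continuousWithinAt
  have hlip : (fun p : ℝ × ℝ => f (u p.1 p.2) - f (y (p.2 * p.1)))
      =O[𝓝[>] 0 ×ˢ 𝓟 (Icc 0 1)] fun p => u p.1 p.2 - y (p.2 * p.1) :=
    (hf.hasStrictFDerivAt (by simp)).isBigO_sub.comp_tendsto (hlim.prodMk_nhds hylim)
  have hh : (fun p : ℝ × ℝ => p.1) =O[𝓝[>] 0 ×ˢ 𝓟 (Icc 0 1)] fun _ => (1 : ℝ) :=
    (tendsto_fst.mono_right nhdsWithin_le_nhds).isBigO_one ℝ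
  refine .of_hasDerivWithinAt (r := fun h c => - (h • D h c))
    (g' := fun h c => h • (f (u h c) - D h c) - h • f (y (c * h))) ?_ ?_ ?_
    (hD.smul_left fun h => h).neg_left
  · filter_upwards [hu, eventually_forall_mul_mem_Icc hT] with h hu hmem c hc
    exact (hu c hc).sub (hasDerivWithinAt_comp_mul hmem (hy _ (hmem c hc)))
  · filter_upwards [hu0] with h hu0
    simp [hu0]
  · refine (hh.smul hlip).congr (fun p => ?_) fun p => ?_
    · simp only [smul_sub]
      abel
    · simp

theorem eventually_eq_of_solutions {y₁ y₂ : ℝ → E} {T₁ T₂ : ℝ} (hf : ContDiffAt ℝ 1 f (y₂ 0))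
    (hT₁ : 0 < T₁) (hy₁ : ∀ t ∈ Icc 0 T₁, HasDerivWithinAt y₁ (f (y₁ t)) (Icc 0 T₁) t)
    (hT₂ : 0 < T₂) (hy₂ : ∀ t ∈ Icc 0 T₂, HasDerivWithinAt y₂ (f (y₂ t)) (Icc 0 T₂) t)
    (h0 : y₁ 0 = y₂ 0) : ∀ᶠ h in 𝓝[>] 0, y₁ h = y₂ h := by
  have hu : ∀ᶠ h in 𝓝[>] 0, HasDefect f h (fun c => y₁ (c * h)) 0 := by
    filter_upwards [eventually_forall_mul_mem_Icc hT₁] with h hmem c hc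
    simpa using hasDerivWithinAt_comp_mul hmem (hy₁ _ (hmem c hc))
  have hlim := tendsto_comp_mul_prod_principal hT₁ fun t ht => (hy₁ t ht).continuousWithinAt
  have hdist := unifBigO_sub_solution hf hT₂ hy₂ hu (.of_forall fun h => by simpa using h0)
    (h0 ▸ hlim) (.of_isBigO (isBigO_zero (E' := E) (fun _ : ℝ => (0 : ℝ)) (𝓝[>] 0)))
  simpa [sub_eq_zero, EventuallyEq] using hdist.isBigO_one

theorem tendsto_of_hasDefect {x : E} (hu : ∀ᶠ h in 𝓝[>] 0, HasDefect f h (u h) (D h))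
    (hu0 : ∀ᶠ h in 𝓝[>] 0, u h 0 = x) (hfu : UnifBigO (𝓝[>] 0) (fun h => f ∘ u h) fun _ => 1)
    (hD : UnifBigO (𝓝[>] 0) D fun _ => 1) :
    Tendsto (fun p : ℝ × ℝ => u p.1 p.2) (𝓝[>] 0 ×ˢ 𝓟 (Icc 0 1)) (𝓝 x) := by
  have hdist : UnifBigO (𝓝[>] 0) (fun h c => u h c - x) fun h => h * 1 := by
    refine .of_hasDerivWithinAt (g' := fun h c => h • (f (u h c) - D h c))
      (hu.mono fun h hu c hc => (hu c hc).sub_const x) (hu0.mono fun h hu0 => sub_eq_zero.2 hu0)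
      ?_ ((hfu.sub hD).smul_left fun h => h)
    simpa using isBigO_zero _ _
  refine tendsto_sub_nhds_zero_iff.1 (hdist.tendsto_zero ?_)
  exact (Continuous.tendsto' (by fun_prop) 0 0 (zero_mul 1)).mono_left nhdsWithin_le_nhds

theorem isBigO_linearization_error (hf : ContDiffAt ℝ 2 f (y 0)) (hT : 0 < T)
    (hy : ContinuousOn y (Icc 0 T))
    (hlim : Tendsto (fun p : ℝ × ℝ => u p.1 p.2) (𝓝[>] 0 ×ˢ 𝓟 (Icc 0 1)) (𝓝 (y 0)))
    (hw : UnifBigO (𝓝[>] 0) (fun h c => u h c - y (c * h)) φ) :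
    UnifBigO (𝓝[>] 0) (fun h c => f (u h c) - f (y (c * h)) -
      fderiv ℝ f (y (c * h)) (u h c - y (c * h))) fun h => φ h ^ 2 :=
  ((isBigO_sub_sub_fderiv_sub_sq hf).comp_tendsto
    (hlim.prodMk_nhds (tendsto_comp_mul_prod_principal hT hy))).trans (hw.norm_left.pow 2)

variable {Z : ℝ → E →L[ℝ] E}

theorem IsAdjointFlow.continuousOn (hZ : IsAdjointFlow f T y Z) : ContinuousOn y (Icc 0 T) :=
  fun t ht => (hZ.hasDerivWithinAt t ht).continuousWithinAt

theorem IsAdjointFlow.continuousOn_adjoint (hZ : IsAdjointFlow f T y Z) :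
    ContinuousOn Z (Icc 0 T) :=
  fun t ht => (hZ.hasDerivWithinAt_adjoint t ht).continuousWithinAt

theorem IsAdjointFlow.hasDerivWithinAt_apply_sub (hZ : IsAdjointFlow f T y Z) {h : ℝ}
    {u D : ℝ → E} (hu : HasDefect f h u D) (hmem : ∀ c ∈ Icc (0 : ℝ) 1, c * h ∈ Icc 0 T) {c : ℝ}
    (hc : c ∈ Icc (0 : ℝ) 1) :
    HasDerivWithinAt (fun c => Z (c * h) (u c - y (c * h)))
      (h • (Z (c * h) (f (u c) - f (y (c * h)) - fderiv ℝ f (y (c * h)) (u c - y (c * h))) -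
        Z (c * h) (D c))) (Icc 0 1) c := by
  have hw := (hu c hc).fun_sub
    (hasDerivWithinAt_comp_mul hmem (hZ.hasDerivWithinAt _ (hmem c hc)))
  have hZ' := hasDerivWithinAt_comp_mul hmem (hZ.hasDerivWithinAt_adjoint _ (hmem c hc))
  convert! hZ'.clm_apply hw using 1
  simp only [smul_apply, neg_apply,
    ContinuousLinearMap.comp_apply, map_sub, map_smul, smul_sub, smul_neg]
  abel

theorem IsAdjointFlow.apply_sub_eq_integral [CompleteSpace E] (hZ : IsAdjointFlow f T y Z)
    (hf : ContDiff ℝ 1 f) {h : ℝ} {u D : ℝ → E} (hu : HasDefect f h u D) (hu0 : u 0 = y 0)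
    (hD : ContinuousOn D (Icc 0 1)) (hmem : ∀ c ∈ Icc (0 : ℝ) 1, c * h ∈ Icc 0 T) :
    Z h (u 1 - y h) = h • ((∫ c in (0 : ℝ)..1, Z (c * h) (f (u c) - f (y (c * h)) -
      fderiv ℝ f (y (c * h)) (u c - y (c * h)))) - ∫ c in (0 : ℝ)..1, Z (c * h) (D c)) := by
  have hmul : ContinuousOn (fun c => c * h) (Icc 0 1) := by fun_prop
  have hZc : ContinuousOn (fun c => Z (c * h)) (Icc 0 1) := hZ.continuousOn_adjoint.comp hmul hmem
  have hyc : ContinuousOn (fun c => y (c * h)) (Icc 0 1) := hZ.continuousOn.comp hmul hmem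
  have huc : ContinuousOn u (Icc 0 1) := fun c hc => (hu c hc).continuousWithinAt
  have hq : ContinuousOn (fun c => Z (c * h) (f (u c) - f (y (c * h)) -
      fderiv ℝ f (y (c * h)) (u c - y (c * h)))) (Icc 0 1) :=
    hZc.clm_apply (((hf.continuous.comp_continuousOn huc).sub
      (hf.continuous.comp_continuousOn hyc)).sub
      (((hf.continuous_fderiv one_ne_zero).comp_continuousOn hyc).clm_apply (huc.sub hyc)))
  have hZD : ContinuousOn (fun c => Z (c * h) (D c)) (Icc 0 1) := hZc.clm_apply hD
  have hderiv (c) (hc : c ∈ Icc (0 : ℝ) 1) := hZ.hasDerivWithinAt_apply_sub hu hmem hc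
  have hFTC := intervalIntegral.integral_eq_sub_of_hasDerivAt_of_le zero_le_one
    (fun c hc => (hderiv c hc).continuousWithinAt)
    (fun c hc => (hderiv c (Ioo_subset_Icc_self hc)).hasDerivAt (Icc_mem_nhds hc.1 hc.2))
    (((hq.sub hZD).const_smul h).intervalIntegrable_of_Icc zero_le_one)
  rw [intervalIntegral.integral_smul, intervalIntegral.integral_sub
    (hq.intervalIntegrable_of_Icc zero_le_one) (hZD.intervalIntegrable_of_Icc zero_le_one)] at hFTC
  simpa [hu0] using hFTC.symm

theorem IsAdjointFlow.isBigO_sub [CompleteSpace E] (hZ : IsAdjointFlow f T y Z)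
    (hf : ContDiff ℝ 2 f) (hu : ∀ᶠ h in 𝓝[>] 0, HasDefect f h (u h) (D h))
    (hu0 : ∀ᶠ h in 𝓝[>] 0, u h 0 = y 0)
    (hlim : Tendsto (fun p : ℝ × ℝ => u p.1 p.2) (𝓝[>] 0 ×ˢ 𝓟 (Icc 0 1)) (𝓝 (y 0)))
    (hDc : ∀ᶠ h in 𝓝[>] 0, ContinuousOn (D h) (Icc 0 1)) (hD : UnifBigO (𝓝[>] 0) D φ)
    (hZD : (fun h => ∫ c in (0 : ℝ)..1, Z (c * h) (D h c)) =O[𝓝[>] 0] ψ)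
    (hφψ : (fun h => (h * φ h) ^ 2) =O[𝓝[>] 0] ψ) :
    (fun h => u h 1 - y h) =O[𝓝[>] 0] fun h => h * ψ h := by
  have hmem := eventually_forall_mul_mem_Icc hZ.pos
  have hf1 : ContDiff ℝ 1 f := hf.of_le (by norm_num)
  have hw := unifBigO_sub_solution hf1.contDiffAt hZ.pos hZ.hasDerivWithinAt hu hu0 hlim hD
  have hq := isBigO_linearization_error hf.contDiffAt hZ.pos hZ.continuousOn hlim hw
  have hZlim : Tendsto (fun p : ℝ × ℝ => Z (p.2 * p.1)) (𝓝[>] 0 ×ˢ 𝓟 (Icc 0 1)) (𝓝 1) :=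
    hZ.adjoint_zero ▸ tendsto_comp_mul_prod_principal hZ.pos hZ.continuousOn_adjoint
  have hZ1 : UnifBigO (𝓝[>] 0) (fun h c => Z (c * h)) fun _ => 1 := hZlim.isBigO_one ℝ
  have hZq := (hZ1.clm_apply hq).integral
  simp only [one_mul] at hZq
  have hint : (fun h => Z h (u h 1 - y h)) =O[𝓝[>] 0] fun h => h * ψ h := by
    refine ((isBigO_refl (fun h : ℝ => h) _).smul ((hZq.trans hφψ).sub hZD)).congr' ?_ .rfl
    filter_upwards [hu, hu0, hDc, hmem] with h hu hu0 hDc hmem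
    exact (hZ.apply_sub_eq_integral hf1 hu hu0 hDc hmem).symm
  have hZ0 : Tendsto Z (𝓝[>] 0) (𝓝 1) := hZ.adjoint_zero ▸
    (hZ.continuousOn_adjoint 0 (left_mem_Icc.2 hZ.pos.le)).tendsto.mono_left
      (nhdsWithin_le_of_mem (Icc_mem_nhdsGT hZ.pos))
  exact (isBigO_clm_apply_of_tendsto_one hZ0 _).trans hint

end Defect

/-! ### Superconvergence -/

section LegendreDefect

variable {ι E : Type*} [NormedAddCommGroup E] [NormedSpace ℝ E] {l : Filter ι} {s : ℕ}

/-- The defect of the method as a solution of `y' = f y`, where `g` stands for `f` along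
the numerical solution: truncation of the Legendre expansion and damping of the retained
coefficients. -/
noncomputable def legendreDefect (s : ℕ) (η : ℕ → ℝ) (g : ℝ → E) (c : ℝ) : E :=
  legendreRem s g c + ∑ j ∈ Finset.range s, legP j c • (1 - η j) • legendreCoeff j g

theorem IsLegendreStep.hasDefect {f : E → E} {η : ℕ → ℝ} {h : ℝ} {u : ℝ → E}
    (hu : IsLegendreStep f s η h u) : HasDefect f h u (legendreDefect s η (f ∘ u)) := by
  intro c hc
  convert! hu c hc using 2
  simp only [legendreDefect, legendreRem, sub_smul, one_smul, smul_sub, Finset.sum_sub_distrib,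
    Function.comp_apply]
  abel

theorem continuousOn_legendreDefect (s : ℕ) (η : ℕ → ℝ) {g : ℝ → E}
    (hg : ContinuousOn g (Icc 0 1)) : ContinuousOn (legendreDefect s η g) (Icc 0 1) :=
  (continuousOn_legendreRem s hg).add (continuous_finsetSum _ fun j _ =>
    (continuous_legP j).smul continuous_const).continuousOn

theorem isBigO_pow_of_le {ε : ι → ℝ} (hε : ε =O[l] fun _ => (1 : ℝ)) {m n : ℕ} (hmn : m ≤ n) :
    (fun i => ε i ^ n) =O[l] fun i => ε i ^ m := by
  obtain ⟨k, rfl⟩ := Nat.exists_eq_add_of_le hmn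
  simpa [pow_add] using (isBigO_refl (fun i => ε i ^ m) l).mul (hε.pow k)

variable [CompleteSpace E] {g : ι → ℝ → E} {η : ℕ → ι → ℝ} {ε : ι → ℝ}

theorem isBigO_damping_smul_legendreCoeff {j : ℕ} (hj : j < s)
    (hg : ∀ᶠ i in l, ContinuousOn (g i) (Icc 0 1))
    (happrox : PolyApprox l j g fun i => ε i ^ j)
    (hη : (fun i => 1 - η j i) =O[l] fun i => ε i ^ (2 * (s - j))) :
    (fun i => (1 - η j i) • legendreCoeff j (g i)) =O[l] fun i => ε i ^ (2 * s - j) := by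
  refine (hη.smul (happrox.legendreCoeff hg le_rfl)).congr_right fun i => ?_
  rw [smul_eq_mul, ← pow_add]
  congr 1
  omega

theorem unifBigO_legendreDefect (hε : ε =O[l] fun _ => (1 : ℝ))
    (hg : ∀ᶠ i in l, ContinuousOn (g i) (Icc 0 1))
    (happrox : ∀ k, PolyApprox l k g fun i => ε i ^ k)
    (hη : ∀ j < s, (fun i => 1 - η j i) =O[l] fun i => ε i ^ (2 * (s - j))) :
    UnifBigO l (fun i => legendreDefect s (fun j => η j i) (g i)) fun i => ε i ^ s := by
  refine ((happrox s).legendreRem hg).add (.sum fun j hj => .legP_smul j (.of_isBigO ?_))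
  have hjs := Finset.mem_range.1 hj
  exact (isBigO_damping_smul_legendreCoeff hjs hg (happrox j) (hη j hjs)).trans
    (isBigO_pow_of_le hε (by omega))

theorem isBigO_integral_clm_legendreDefect {G : Type*} [NormedAddCommGroup G] [NormedSpace ℝ G]
    [CompleteSpace G] {W : ι → ℝ → E →L[ℝ] G}
    (hW : ∀ᶠ i in l, ContinuousOn (W i) (Icc 0 1))
    (hWapprox : ∀ k, PolyApprox l k W fun i => ε i ^ k)
    (hg : ∀ᶠ i in l, ContinuousOn (g i) (Icc 0 1))
    (hgapprox : ∀ k, PolyApprox l k g fun i => ε i ^ k)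
    (hη : ∀ j < s, (fun i => 1 - η j i) =O[l] fun i => ε i ^ (2 * (s - j))) :
    (fun i => ∫ c in (0 : ℝ)..1, W i c (legendreDefect s (fun j => η j i) (g i) c)) =O[l]
      fun i => ε i ^ (2 * s) := by
  have hrem := (hWapprox s).integral_clm_legendreRem (hgapprox s) hW hg
  simp only [← pow_add, ← two_mul] at hrem
  have hdamp : (fun i => ∑ j ∈ Finset.range s,
      legendreCoeff j (W i) ((1 - η j i) • legendreCoeff j (g i))) =O[l]
        fun i => ε i ^ (2 * s) := by
    refine .fun_sum fun j hj => ?_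
    have hjs := Finset.mem_range.1 hj
    have hWj := (hWapprox j).legendreCoeff hW le_rfl
    have hgj := isBigO_damping_smul_legendreCoeff hjs hg (hgapprox j) (hη j hjs)
    refine (IsBigO.of_norm_le fun i => (legendreCoeff j (W i)).le_opNorm _).trans
      ((hWj.norm_left.mul hgj.norm_left).congr_right fun i => ?_)
    rw [← pow_add]
    congr 1
    omega
  refine (hrem.add hdamp).congr' ?_ .rfl
  filter_upwards [hW, hg] with i hWi hgi
  have hsum : ContinuousOn (fun c => ∑ j ∈ Finset.range s,
      legP j c • (1 - η j i) • legendreCoeff j (g i)) (Icc 0 1) :=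
    (continuous_finsetSum _ fun j _ => (continuous_legP j).smul continuous_const).continuousOn
  simp only [legendreDefect, map_add, ← integral_clm_sum_legP_smul _ hWi]
  exact (intervalIntegral.integral_add
    ((hWi.clm_apply (continuousOn_legendreRem s hgi)).intervalIntegrable_of_Icc zero_le_one)
    ((hWi.clm_apply hsum).intervalIntegrable_of_Icc zero_le_one)).symm

end LegendreDefect

section Superconvergence

variable {E : Type*} [NormedAddCommGroup E] [NormedSpace ℝ E] [CompleteSpace E] {f : E → E} {s : ℕ}
  {η : ℕ → ℝ → ℝ} {K : Set E}

theorem IsAdjointFlow.isBigO_sub_of_isLegendreStep {T : ℝ} {y : ℝ → E} {Z : ℝ → E →L[ℝ] E}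
    {u : ℝ → ℝ → E} (hf : ContDiff ℝ (⊤ : ℕ∞) f) (hZ : IsAdjointFlow f T y Z)
    (hZs : ContDiffOn ℝ (⊤ : ℕ∞) Z (Icc 0 T)) (hK : IsCompact K)
    (hη : ∀ j < s, (fun h => 1 - η j h) =O[𝓝[>] 0] fun h => h ^ (2 * (s - j)))
    (hu : ∀ᶠ h in 𝓝[>] 0, IsLegendreStep f s (fun j => η j h) h (u h))
    (hu0 : ∀ᶠ h in 𝓝[>] 0, u h 0 = y 0)
    (huK : ∀ᶠ h in 𝓝[>] 0, ∀ c ∈ Icc (0 : ℝ) 1, u h c ∈ K) :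
    (fun h => u h 1 - y h) =O[𝓝[>] 0] fun h => h ^ (2 * s + 1) := by
  have hh : (fun h : ℝ => h) =O[𝓝[>] 0] fun _ => (1 : ℝ) :=
    (tendsto_id.mono_left nhdsWithin_le_nhds).isBigO_one ℝ
  have hη1 : ∀ j < s, η j =O[𝓝[>] 0] fun _ => (1 : ℝ) := fun j hj => by
    have h1η := (hη j hj).trans (isBigO_pow_of_le hh (Nat.zero_le _))
    simp only [pow_zero] at h1η
    simpa only [sub_sub_cancel] using (isBigO_refl (fun _ : ℝ => (1 : ℝ)) (𝓝[>] 0)).sub h1η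
  have happrox := IsLegendreStep.polyApprox_comp hf hK hη1 hu huK
  have hfu : ∀ᶠ h in 𝓝[>] 0, ContinuousOn (f ∘ u h) (Icc 0 1) :=
    hu.mono fun h hu => hf.continuous.comp_continuousOn hu.contDiffOn.continuousOn
  have hfu1 : UnifBigO (𝓝[>] 0) (fun h => f ∘ u h) fun _ => 1 := by
    obtain ⟨B, hB⟩ := happrox 0
    simpa only [Finset.range_zero, Finset.sum_empty, sub_zero, pow_zero] using hB
  have hD := unifBigO_legendreDefect hh hfu happrox hη
  have hdefect := hu.mono fun h hu => hu.hasDefect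
  have hlim := tendsto_of_hasDefect hdefect hu0 hfu1
    (hD.trans (by simpa using isBigO_pow_of_le hh (Nat.zero_le s)))
  have hZc : ∀ᶠ h in 𝓝[>] 0, ContinuousOn (fun c => Z (c * h)) (Icc 0 1) :=
    (eventually_forall_mul_mem_Icc hZ.pos).mono fun h hmem =>
      hZ.continuousOn_adjoint.comp (by fun_prop) hmem
  have hZD := isBigO_integral_clm_legendreDefect hZc
    (fun k => polyApprox_comp_mul hZ.pos (hZs.of_le (by exact_mod_cast le_top))) hfu happrox hη
  simp only [pow_succ' _ (2 * s)]
  refine hZ.isBigO_sub (contDiff_infty.1 hf 2) hdefect hu0 hlim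
    (hfu.mono fun h hfu => continuousOn_legendreDefect s _ hfu) hD hZD ?_
  exact (isBigO_pow_of_le hh (by omega : 2 * s ≤ (s + 1) * 2)).congr_left fun h => by ring

theorem stmt6_general (hf : ContDiff ℝ (⊤ : ℕ∞) f) {h₀ : ℝ} (hh₀ : 0 < h₀) {y : ℝ → E}
    (hy : ∀ t ∈ Icc 0 h₀, HasDerivWithinAt y (f (y t)) (Icc 0 h₀) t)
    (hη : ∀ j < s, (fun h => 1 - η j h) =O[𝓝[>] 0] fun h => h ^ (2 * (s - j)))
    {σ : ℝ → ℝ → E} (hσ0 : ∀ᶠ h in 𝓝[>] 0, σ h 0 = y 0)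
    (hσ' : ∀ᶠ h in 𝓝[>] 0, ∀ c ∈ Icc (0 : ℝ) 1, HasDerivWithinAt (σ h)
      (∑ j ∈ Finset.range s,
        legP j c • η j h • ∫ τ in (0 : ℝ)..1, legP j τ • f (σ h (τ * h))) (Icc 0 h) (c * h))
    (hK : IsCompact K) (hσK : ∀ᶠ h in 𝓝[>] 0, ∀ t ∈ Icc 0 h, σ h t ∈ K) :
    (fun h => σ h h - y h) =O[𝓝[>] 0] fun h => h ^ (2 * s + 1) := by
  have hmem : ∀ᶠ h : ℝ in 𝓝[>] 0, ∀ c ∈ Icc (0 : ℝ) 1, c * h ∈ Icc 0 h := by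
    filter_upwards [self_mem_nhdsWithin] with h hh c hc
    exact ⟨mul_nonneg hc.1 (le_of_lt hh), mul_le_of_le_one_left (le_of_lt hh) hc.2⟩
  have hstep : ∀ᶠ h in 𝓝[>] 0, IsLegendreStep f s (fun j => η j h) h fun c => σ h (c * h) := by
    filter_upwards [hσ', hmem] with h hσ' hmem c hc
    exact hasDerivWithinAt_comp_mul hmem (hσ' c hc)
  obtain ⟨T, z, Z, hZ, hz0, hZs⟩ := exists_isAdjointFlow hf (y 0)
  have hyz : ∀ᶠ h in 𝓝[>] 0, z h = y h :=
    eventually_eq_of_solutions (hf.of_le (by simp)).contDiffAt hZ.pos hZ.hasDerivWithinAt hh₀ hy hz0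
  refine (hZ.isBigO_sub_of_isLegendreStep hf hZs hK hη hstep ?_ ?_).congr' ?_ .rfl
  · simpa [hz0] using hσ0
  · filter_upwards [hσK, hmem] with h hσK hmem c hc using hσK _ (hmem c hc)
  · filter_upwards [hyz] with h hyz
    simp [hyz]

end Superconvergence

section HamiltonianSystem

theorem contDiff_gradient {F : Type*} [NormedAddCommGroup F] [InnerProductSpace ℝ F]
    [CompleteSpace F] {H : F → ℝ} (hH : ContDiff ℝ (⊤ : ℕ∞) H) :
    ContDiff ℝ (⊤ : ℕ∞) (gradient H) :=
  (InnerProductSpace.toDual ℝ F).symm.toContinuousLinearEquiv.contDiff.comp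
    (hH.fderiv_right (by simp))

theorem hasDerivWithinAt_sum_legP_clm_comp {E F : Type*} [NormedAddCommGroup E] [NormedSpace ℝ E]
    [CompleteSpace E] [NormedAddCommGroup F] [NormedSpace ℝ F] [CompleteSpace F] (A : F →L[ℝ] E)
    {g : E → F} (hg : Continuous g) {s : ℕ} {η : ℕ → ℝ} {h : ℝ} {u : ℝ → E}
    (hu : ∀ c ∈ Icc (0 : ℝ) 1, HasDerivAt u (∑ j ∈ Finset.range s,
      legP j c • η j • A (∫ τ in (0 : ℝ)..1, legP j τ • g (u (τ * h)))) (c * h)) :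
    ∀ c ∈ Icc (0 : ℝ) 1, HasDerivWithinAt u (∑ j ∈ Finset.range s,
      legP j c • η j • ∫ τ in (0 : ℝ)..1, legP j τ • (A ∘ g) (u (τ * h))) (Icc 0 h) (c * h) := by
  intro c hc
  have huc : ContinuousOn (fun τ => u (τ * h)) (Icc 0 1) := fun τ hτ =>
    ((hu τ hτ).continuousAt.comp (f := (· * h)) (by fun_prop)).continuousWithinAt
  have hcomm (j : ℕ) := legendreCoeff_clm_apply j A (hg.comp_continuousOn huc)
  simp only [legendreCoeff, Function.comp_apply] at hcomm
  simp only [Function.comp_apply, hcomm]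
  exact (hu c hc).hasDerivWithinAt

theorem isBigO_nhdsGT_pow_iff {F : Type*} [NormedAddCommGroup F] {g : ℝ → F} {n : ℕ} :
    (g =O[𝓝[>] 0] fun h => h ^ n) ↔
      ∃ C > (0 : ℝ), ∃ h₁ > (0 : ℝ), ∀ h : ℝ, 0 < h → h ≤ h₁ → ‖g h‖ ≤ C * h ^ n := by
  rw [isBigO_iff']
  refine exists_congr fun C => and_congr_right fun _ => ?_
  rw [Filter.Eventually, mem_nhdsGT_iff_exists_Ioc_subset]
  refine exists_congr fun h₁ => and_congr_right fun _ =>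
    ⟨fun hC h hh hle => ?_, fun hC h ⟨hh, hle⟩ => ?_⟩
  · simpa [abs_of_pos hh] using hC ⟨hh, hle⟩
  · simpa [abs_of_pos hh] using hC h hh hle

theorem isBigO_one_sub_damping {s ν : ℕ} {α η : ℕ → ℝ → ℝ}
    (hα : ∀ j, s - ν ≤ j → j ≤ s - 1 → α j =O[𝓝[>] 0] fun h => h ^ 2)
    (hη₁ : ∀ j, j ≤ s - ν - 1 → ∀ h, η j h = 1)
    (hη₂ : ∀ j, s - ν ≤ j → j ≤ s - 1 → ∀ h, η j h = 1 - h ^ (2 * (s - 1 - j)) * α j h)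
    {j : ℕ} (hj : j < s) : (fun h => 1 - η j h) =O[𝓝[>] 0] fun h => h ^ (2 * (s - j)) := by
  rcases le_or_gt (s - ν) j with hνj | hjν
  · simp only [hη₂ j hνj (by omega), sub_sub_cancel,
      show 2 * (s - j) = 2 * (s - 1 - j) + 2 by omega, pow_add]
    exact (isBigO_refl _ _).mul (hα j hνj (by omega))
  · simp only [hη₁ j (by omega), sub_self]
    exact isBigO_zero _ _

end HamiltonianSystem

/-- Corollary 1 of the paper.  Let `y` solve the Hamiltonian system
`y' = J ∇H(y)`, `y(0) = y₀`, and for `h ∈ (0, h₀]` let `σ_h ∈ Π_s` satisfy `σ_h(0) = y₀` and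
`σ_h'(ch) = ∑_{j<s} P_j(c) γ_j(h)`, `γ_j(h) = η_j(h) J ∫₀¹ P_j(τ)∇H(σ_h(τh)) dτ`, where
`η_j(h) = 1` for `j ≤ s-ν-1` and `η_j(h) = 1 - h^{2(s-1-j)} α_j(h)` with `α_j(h) = O(h²)`
otherwise.  If the `σ_h` stay in a fixed compact set, then `‖σ_h(h) - y(h)‖ = O(h^{2s+1})`. -/
theorem stmt6 (m : ℕ) (hm : 1 ≤ m)
    (H : ESp m → ℝ) (hH : ContDiff ℝ (⊤ : ℕ∞) H)
    (h₀ : ℝ) (hh₀ : 0 < h₀)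
    (y₀ : ESp m) (y : ℝ → ESp m) (hy0 : y 0 = y₀)
    (hy : ∀ t ∈ Set.Icc 0 h₀,
      HasDerivAt y (Matrix.toEuclideanLin (Jmat m) (gradient H (y t))) t)
    (s ν : ℕ) (hν : 1 ≤ ν) (hνs : ν < s)
    (σ : ℝ → ℝ → ESp m)
    (α : ℕ → ℝ → ℝ)
    (hα : ∀ j, s - ν ≤ j → j ≤ s - 1 →
      ∃ C > (0:ℝ), ∃ h₁ > (0:ℝ), ∀ h : ℝ, 0 < h → h ≤ h₁ → |α j h| ≤ C * h ^ 2)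
    (η : ℕ → ℝ → ℝ)
    (hη₁ : ∀ j, j ≤ s - ν - 1 → ∀ h : ℝ, η j h = 1)
    (hη₂ : ∀ j, s - ν ≤ j → j ≤ s - 1 → ∀ h : ℝ,
      η j h = 1 - h ^ (2 * (s - 1 - j)) * α j h)
    (hσ₀ : ∀ h ∈ Set.Ioc (0:ℝ) h₀, σ h 0 = y₀)
    (hσpoly : ∀ h ∈ Set.Ioc (0:ℝ) h₀,
      ∃ a : Fin (s + 1) → ESp m, ∀ t : ℝ, σ h t = ∑ i : Fin (s + 1), t ^ (i : ℕ) • a i)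
    (hσ' : ∀ h ∈ Set.Ioc (0:ℝ) h₀, ∀ c ∈ Set.Icc (0:ℝ) 1,
      HasDerivAt (σ h)
        (∑ j ∈ Finset.range s, legP j c •
          (η j h • Matrix.toEuclideanLin (Jmat m)
            (∫ τ in (0:ℝ)..1, legP j τ • gradient H (σ h (τ * h)))))
        (c * h))
    (K : Set (ESp m)) (hK : IsCompact K)
    (hσK : ∀ h ∈ Set.Ioc (0:ℝ) h₀, ∀ t ∈ Set.Icc 0 h, σ h t ∈ K) :
    ∃ C > (0:ℝ), ∃ h₁ > (0:ℝ), ∀ h : ℝ, 0 < h → h ≤ min h₀ h₁ →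
      ‖σ h h - y h‖ ≤ C * h ^ (2 * s + 1) := by
  have hev : ∀ᶠ h in 𝓝[>] 0, h ∈ Ioc 0 h₀ := Ioc_mem_nhdsGT hh₀
  have hgrad : ContDiff ℝ (⊤ : ℕ∞) (gradient H) := contDiff_gradient hH
  let A : ESp m →L[ℝ] ESp m := (Matrix.toEuclideanLin (Jmat m)).toContinuousLinearMap
  obtain ⟨C, hC, h₁, hh₁, hbound⟩ := isBigO_nhdsGT_pow_iff.1 <|
    stmt6_general (A.contDiff.comp hgrad) hh₀ (fun t ht => (hy t ht).hasDerivWithinAt)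
      (fun j hj => isBigO_one_sub_damping
        (fun i hi hi' => isBigO_nhdsGT_pow_iff.2 (hα i hi hi')) hη₁ hη₂ hj)
      (hev.mono fun h hh => (hσ₀ h hh).trans hy0.symm)
      (hev.mono fun h hh => hasDerivWithinAt_sum_legP_clm_comp A hgrad.continuous (hσ' h hh))
      hK (hev.mono hσK)
  exact ⟨C, hC, h₁, hh₁, fun h hh hle => hbound h hh (hle.trans (min_le_right _ _))⟩
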